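/- For k ≥ 2 and n ≥ k+1, let T_{n,k} be the tree with a central vertex v of degree k such that T_{n,k} − v is the disjoint union of r paths P_{q+1} and (k−r) paths P_q, where q = ⌊(n−1)/k⌋ and r = n − 1 − kq. Then F(T_{n,k}) = (q+2)^r (q+1)^{k−r} + (q+1)(qk + 2r)/2, and T_{n,k} maximizes F over all trees on n vertices with exactly k leaves (for 2 ≤ k ≤ n−3). -/

import Mathlib

open SimpleGraph

/-- The core index of a graph `G`: the number of connected subgraphs of `G`. -/
noncomputable def coreIndex {V : Type*} (G : SimpleGraph V) : ℕ :=
  Nat.card {H : G.Subgraph // H.Connected}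

/-- The spider tree with a central vertex joined to `r` pendant paths on `q + 1`
vertices and `k - r` pendant paths on `q` vertices. -/
def spider (k q r : ℕ) : SimpleGraph (Unit ⊕ ((Fin r × Fin (q + 1)) ⊕ (Fin (k - r) × Fin q))) :=
  SimpleGraph.fromRel (fun x y =>
    (∃ p : Fin r × Fin (q + 1), x = Sum.inl () ∧ y = Sum.inr (Sum.inl p) ∧
      (p.2 : ℕ) = 0) ∨
    (∃ p : Fin (k - r) × Fin q, x = Sum.inl () ∧ y = Sum.inr (Sum.inr p) ∧
      (p.2 : ℕ) = 0) ∨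
    (∃ (i : Fin r) (a b : Fin (q + 1)), x = Sum.inr (Sum.inl (i, a)) ∧
      y = Sum.inr (Sum.inl (i, b)) ∧ (b : ℕ) = (a : ℕ) + 1) ∨
    (∃ (i : Fin (k - r)) (a b : Fin q), x = Sum.inr (Sum.inr (i, a)) ∧
      y = Sum.inr (Sum.inr (i, b)) ∧ (b : ℕ) = (a : ℕ) + 1))

/-!
Root the tree at a vertex `v` that lies in as many subtrees as possible, and count subtrees by
their topmost vertex. Working upwards from the leaves, replace each branch by paths with the same
total numbers of vertices and leaves. Such a replacement loses no subtrees as long as the rest of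
the tree contributes at least as many subtrees at the attachment point as the branch does at its
top. This condition passes from a branch to the branches inside it, so it is only needed at the
children of the root, where it follows from the maximality of `v`. Hence some spider
with the same numbers of vertices and leaves has at least as many subtrees.

In a spider, moving a vertex from a leg on `b + 1` vertices to one on `a ≤ b` vertices changes the
number of subtrees avoiding the centre by `a - b` and the number of those containing it by `b - a`
times a positive number, so the most even distribution is optimal.
-/

section ParentMap

variable {V : Type*} {p : V → Option V} {u x y c c' : V} {S : Finset V}

/-- `p` is the parent map of a rooted forest: the roots are the vertices with `p x = none`, and
following parents always ends at a root. -/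
def IsParentMap (p : V → Option V) : Prop :=
  WellFounded fun x y ↦ p y = some x

/-- `x` lies in the branch hanging from `u`, that is, `u` is reached from `x` by following
parents. In particular `u` is a descendant of itself. -/
def IsDescendant (p : V → Option V) (x u : V) : Prop :=
  Relation.ReflTransGen (fun a b ↦ p a = some b) x u

/-- `S` is the vertex set of a subtree of the rooted forest `p` with topmost vertex `u`. -/
structure IsSubtreeAt (p : V → Option V) (u : V) (S : Finset V) : Prop where
  top_mem : u ∈ S
  exists_parent_mem : ∀ w ∈ S, w ≠ u → ∃ x ∈ S, p w = some x

/-- The forest `G` is rooted by the parent map `p`. -/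
structure IsRooting (G : SimpleGraph V) (p : V → Option V) : Prop where
  isParentMap : IsParentMap p
  adj_iff : ∀ x y, G.Adj x y ↔ p x = some y ∨ p y = some x

lemma IsParentMap.not_isDescendant_of_parent (hp : IsParentMap p) (hc : p c = some y) :
    ¬ IsDescendant p y c := by
  induction c using hp.induction generalizing y with
  | h c ih =>
    intro h
    rcases h.cases_head with rfl | ⟨z, hz, hzc⟩
    · exact ih _ hc hc .refl
    · exact ih y hc hz (hzc.tail hc)

lemma IsParentMap.eq_of_isDescendant (hp : IsParentMap p) (hc : p c = some y)
    (hc' : p c' = some y) (hx : IsDescendant p x c) (hx' : IsDescendant p x c') : c = c' := by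
  have eq_of_descendant : ∀ {a b}, p a = some y → p b = some y → IsDescendant p a b → a = b := by
    intro a b ha hb hab
    rcases hab.cases_head with rfl | ⟨z, hz, hzb⟩
    · rfl
    · obtain rfl : y = z := Option.some_injective _ (ha.symm.trans hz)
      exact absurd hzb (hp.not_isDescendant_of_parent hb)
  have right_unique : Relator.RightUnique fun a b ↦ p a = some b :=
    fun _ _ _ hb hb' ↦ Option.some_injective _ (hb.symm.trans hb')
  rcases hx.total_of_right_unique right_unique hx' with h | h
  · exact eq_of_descendant hc hc' h
  · exact (eq_of_descendant hc' hc h).symm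

namespace IsSubtreeAt

lemma isDescendant (hp : IsParentMap p) (hS : IsSubtreeAt p u S) (hx : x ∈ S) :
    IsDescendant p x u := by
  induction x using hp.induction with
  | h x ih =>
    by_cases hxu : x = u
    · exact hxu ▸ .refl
    · obtain ⟨y, hyS, hxy⟩ := hS.exists_parent_mem x hx hxu
      exact .head hxy (ih y hxy hyS)

lemma top_unique (hp : IsParentMap p) (hS : IsSubtreeAt p u S) (hS' : IsSubtreeAt p x S) :
    u = x := by
  by_contra hux
  obtain ⟨w, hw, hmin⟩ := hp.has_min (S : Set V) ⟨u, hS.top_mem⟩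
  have parent_mem : ∃ y ∈ S, p w = some y := by
    by_cases hwu : w = u
    · exact hS'.exists_parent_mem w hw (hwu ▸ hux)
    · exact hS.exists_parent_mem w hw hwu
  obtain ⟨y, hyS, hy⟩ := parent_mem
  exact hmin y hyS hy

lemma child_mem_of_isDescendant (hp : IsParentMap p) (hS : IsSubtreeAt p u S)
    (hc : p c = some u) (hx : x ∈ S) (hxc : IsDescendant p x c) : c ∈ S := by
  induction hxc using Relation.ReflTransGen.head_induction_on with
  | refl => exact hx
  | @head x a hxa hac ih =>
    have hxu : x ≠ u := by
      rintro rfl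
      exact hp.not_isDescendant_of_parent hc (.head hxa hac)
    obtain ⟨b, hb, hxb⟩ := hS.exists_parent_mem x hx hxu
    obtain rfl : a = b := Option.some_injective _ (hxa.symm.trans hxb)
    exact ih hb

lemma insert_biUnion [DecidableEq V] {T : V → Finset V} (hS : ∀ c ∈ S, p c = some u)
    (hT : ∀ c ∈ S, T c = ∅ ∨ IsSubtreeAt p c (T c)) :
    IsSubtreeAt p u (insert u (S.biUnion T)) where
  top_mem := Finset.mem_insert_self _ _
  exists_parent_mem w hw hwu := by
    obtain ⟨c, hc, hwc⟩ := Finset.mem_biUnion.1 (Finset.mem_of_mem_insert_of_ne hw hwu)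
    by_cases hwc' : w = c
    · exact ⟨u, Finset.mem_insert_self _ _, hwc' ▸ hS c hc⟩
    · have hTc := (hT c hc).resolve_left (Finset.ne_empty_of_mem hwc)
      obtain ⟨x, hx, hwx⟩ := hTc.exists_parent_mem w hwc hwc'
      exact ⟨x, Finset.mem_insert_of_mem (Finset.mem_biUnion.2 ⟨c, hc, hx⟩), hwx⟩

end IsSubtreeAt

section Graph

variable {G : SimpleGraph V}

lemma IsRooting.exists_top (hG : IsRooting G p) {H : G.Subgraph} (hH : H.Connected) :
    ∃ u ∈ H.verts, (∀ x ∈ H.verts, p u ≠ some x) ∧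
      ∀ w ∈ H.verts, w ≠ u → ∃ x, p w = some x ∧ H.Adj w x := by
  obtain ⟨u, hu, hmin⟩ := hG.isParentMap.has_min H.verts hH.nonempty
  have exists_descent : ∀ z : H.verts, Relation.ReflTransGen H.coe.Adj ⟨u, hu⟩ z →
      Relation.ReflTransGen (fun a b ↦ p b = some a ∧ H.Adj b a) u z := by
    intro z hz
    induction hz with
    | refl => exact .refl
    | @tail a b _ hab ih =>
      have hab : H.Adj a b := hab
      rcases (hG.adj_iff _ _).1 hab.adj_sub with hp | hp
      · rcases ih.cases_tail with ha | ⟨c, hc, hpc, -⟩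
        · exact absurd (ha ▸ hp) (hmin b b.2)
        · obtain rfl : c = b := Option.some_injective _ (hpc.symm.trans hp)
          exact hc
      · exact ih.tail ⟨hp, hab.symm⟩
  refine ⟨u, hu, hmin, fun w hw hwu ↦ ?_⟩
  have hreach := (H.coe.reachable_iff_reflTransGen ⟨u, hu⟩ ⟨w, hw⟩).1 (hH.coe.preconnected _ _)
  rcases (exists_descent _ hreach).cases_tail with h | ⟨x, -, hx⟩
  · exact absurd h hwu
  · exact ⟨x, hx⟩

lemma IsRooting.induce_verts_eq (hG : IsRooting G p) {H : G.Subgraph} (hH : H.Connected) :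
    (⊤ : G.Subgraph).induce H.verts = H := by
  obtain ⟨u, -, hroot, hparent⟩ := hG.exists_top hH
  have adj_parent : ∀ {x y}, x ∈ H.verts → y ∈ H.verts → p x = some y → H.Adj x y := by
    intro x y hx hy hxy
    obtain ⟨z, hxz, hadj⟩ := hparent x hx fun h ↦ hroot y hy (h ▸ hxy)
    rwa [Option.some_injective _ (hxy.symm.trans hxz)]
  ext x y
  · simp
  · refine ⟨fun ⟨hx, hy, hxy⟩ ↦ ?_, fun h ↦ ⟨h.fst_mem, h.snd_mem, h.adj_sub⟩⟩
    rcases (hG.adj_iff x y).1 hxy with h | h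
    · exact adj_parent hx hy h
    · exact (adj_parent hy hx h).symm

lemma IsRooting.connected_induce_iff (hG : IsRooting G p) :
    (G.induce (S : Set V)).Connected ↔ ∃ u, IsSubtreeAt p u S := by
  constructor
  · intro hS
    obtain ⟨u, hu, -, hparent⟩ := hG.exists_top (SimpleGraph.connected_induce_iff.1 hS)
    refine ⟨u, hu, fun w hw hwu ↦ ?_⟩
    obtain ⟨x, hwx, hadj⟩ := hparent w hw hwu
    exact ⟨x, hadj.snd_mem, hwx⟩
  · rintro ⟨u, hS⟩
    have reachable_top : ∀ w (hw : w ∈ S),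
        (G.induce (S : Set V)).Reachable ⟨w, hw⟩ ⟨u, hS.top_mem⟩ := by
      intro w
      induction w using hG.isParentMap.induction with
      | h w ih =>
        intro hw
        by_cases hwu : w = u
        · subst hwu
          exact .refl _
        · obtain ⟨x, hxS, hwx⟩ := hS.exists_parent_mem w hw hwu
          have hadj : (G.induce (S : Set V)).Adj ⟨w, hw⟩ ⟨x, hxS⟩ :=
            (hG.adj_iff w x).2 (.inl hwx)
          exact hadj.reachable.trans (ih x hwx hxS)
    exact connected_iff_exists_forall_reachable _ |>.2
      ⟨⟨u, hS.top_mem⟩, fun w ↦ (reachable_top w w.2).symm⟩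

lemma exists_isRooting (hG : G.IsTree) (v : V) :
    ∃ p, IsRooting G p ∧ ∀ x, p x = none ↔ x = v := by
  classical
  choose P hP hlength using hG.connected.exists_path_of_dist v
  have penultimate_eq {x y} (hxy : G.Adj x y) (hd : G.dist v x = G.dist v y + 1) :
      (P x).penultimate = y := by
    have hpath : ((P y).concat hxy.symm).IsPath :=
      Walk.isPath_of_length_eq_dist _ (by rw [Walk.length_concat, hlength, hd])
    rw [(hG.existsUnique_path v x).unique (hP x) hpath, Walk.penultimate_concat]
  have adj_penultimate {x} (hx : x ≠ v) : G.Adj x (P x).penultimate :=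
    ((P x).adj_penultimate (Walk.not_nil_of_ne hx.symm)).symm
  have dist_penultimate {x} (hx : x ≠ v) : G.dist v (P x).penultimate < G.dist v x := by
    have hle := G.dist_le (P x).dropLast
    have hpos := hG.connected.pos_dist_of_ne hx.symm
    rw [Walk.length_dropLast, hlength] at hle
    omega
  refine ⟨fun x ↦ if x = v then none else some (P x).penultimate, ⟨?_, fun x y ↦ ?_⟩, by simp⟩
  · refine Subrelation.wf (fun {x y} hxy ↦ ?_) (measure (G.dist v)).wf
    obtain ⟨hy, rfl⟩ : y ≠ v ∧ (P y).penultimate = x := by simpa using hxy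
    exact dist_penultimate hy
  · simp only [Option.ite_none_left_eq_some, Option.some_inj]
    constructor
    · intro hxy
      rcases hG.dist_eq_dist_add_one_of_adj v hxy with hd | hd
      · exact .inl ⟨by rintro rfl; simp at hd, penultimate_eq hxy hd⟩
      · exact .inr ⟨by rintro rfl; simp at hd, penultimate_eq hxy.symm hd⟩
    · rintro (⟨hx, rfl⟩ | ⟨hy, rfl⟩)
      · exact adj_penultimate hx
      · exact (adj_penultimate hy).symm

lemma connected_subgraph_map {W : Type*} {H : SimpleGraph W} (f : G →g H) {K : G.Subgraph}
    (hK : K.Connected) : (K.map f).Connected := by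
  let g : K.coe →g (K.map f).coe :=
    ⟨fun x ↦ ⟨f x, Set.mem_image_of_mem f x.2⟩, fun h ↦ ⟨_, _, h, rfl, rfl⟩⟩
  refine ⟨hK.coe.map g ?_⟩
  rintro ⟨_, x, hx, rfl⟩
  exact ⟨⟨x, hx⟩, rfl⟩

lemma coreIndex_congr {W : Type*} {H : SimpleGraph W} (φ : G ≃g H) :
    coreIndex G = coreIndex H := by
  refine Nat.card_congr ⟨fun K ↦ ⟨K.1.map φ.toHom, connected_subgraph_map _ K.2⟩,
    fun K ↦ ⟨K.1.map φ.symm.toHom, connected_subgraph_map _ K.2⟩, fun K ↦ ?_, fun K ↦ ?_⟩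
  · ext1
    simp [← Subgraph.map_comp]
  · ext1
    simp [← Subgraph.map_comp]

end Graph

end ParentMap

section Counting

variable {V : Type*} [Fintype V] {p : V → Option V} {u v x c : V} {S Z : Finset V}

open scoped Classical in
/-- The vertices whose parent is `u`. -/
noncomputable def children (p : V → Option V) (u : V) : Finset V := {c | p c = some u}

open scoped Classical in
/-- The vertex set of the branch hanging from `u`, with `u` included. -/
noncomputable def descendants (p : V → Option V) (u : V) : Finset V := {x | IsDescendant p x u}

open scoped Classical in
/-- The subtrees with topmost vertex `u`, encoded by their vertex sets. -/
noncomputable def subtreesAt (p : V → Option V) (u : V) : Finset (Finset V) :=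
  {S | IsSubtreeAt p u S}

/-- The number of subtrees with topmost vertex `u`. -/
noncomputable def subtreeCount (p : V → Option V) (u : V) : ℕ := (subtreesAt p u).card

@[simp] lemma mem_children : c ∈ children p u ↔ p c = some u := by simp [children]

@[simp] lemma mem_descendants : x ∈ descendants p u ↔ IsDescendant p x u := by simp [descendants]

@[simp] lemma mem_subtreesAt : S ∈ subtreesAt p u ↔ IsSubtreeAt p u S := by simp [subtreesAt]

lemma self_mem_descendants (p : V → Option V) (u : V) : u ∈ descendants p u :=
  mem_descendants.2 .refl

open scoped Classical in
lemma descendants_eq_insert (p : V → Option V) (u : V) :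
    descendants p u = insert u ((children p u).biUnion (descendants p)) := by
  ext x
  simp only [Finset.mem_insert, Finset.mem_biUnion, mem_children, mem_descendants]
  constructor
  · intro h
    rcases h.cases_tail with h | ⟨c, hxc, hc⟩
    · exact .inl h.symm
    · exact .inr ⟨c, hc, hxc⟩
  · rintro (rfl | ⟨c, hc, hxc⟩)
    exacts [.refl, hxc.tail hc]

namespace IsParentMap

lemma notMem_descendants_of_mem_children (hp : IsParentMap p) (hc : c ∈ children p u) :
    u ∉ descendants p c :=
  fun h ↦ hp.not_isDescendant_of_parent (mem_children.1 hc) (mem_descendants.1 h)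

lemma pairwiseDisjoint_descendants (hp : IsParentMap p) (u : V) :
    (children p u : Set V).PairwiseDisjoint (descendants p) := by
  intro c hc c' hc' hne
  refine Finset.disjoint_left.2 fun x hx hx' ↦ hne ?_
  exact hp.eq_of_isDescendant (mem_children.1 hc) (mem_children.1 hc')
    (mem_descendants.1 hx) (mem_descendants.1 hx')

lemma sum_descendants {M : Type*} [AddCommMonoid M] (hp : IsParentMap p) (u : V) (f : V → M) :
    ∑ x ∈ descendants p u, f x = f u + ∑ c ∈ children p u, ∑ x ∈ descendants p c, f x := by
  classical
  rw [descendants_eq_insert, Finset.sum_insert,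
    Finset.sum_biUnion (hp.pairwiseDisjoint_descendants u)]
  simpa using fun c ↦ hp.not_isDescendant_of_parent

lemma child_induction (hp : IsParentMap p) {P : V → Prop}
    (ih : ∀ u, (∀ c ∈ children p u, P c) → P u) (u : V) : P u := by
  induction h : (descendants p u).card using Nat.strong_induction_on generalizing u with
  | _ n hn =>
    subst h
    refine ih u fun c hc ↦ hn _ (Finset.card_lt_card ?_) c rfl
    refine (Finset.ssubset_iff_of_subset fun x hx ↦ ?_).2
      ⟨u, self_mem_descendants p u, hp.notMem_descendants_of_mem_children hc⟩
    exact mem_descendants.2 ((mem_descendants.1 hx).tail (mem_children.1 hc))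

lemma descendants_eq_univ (hp : IsParentMap p) (hv : ∀ x, p x = none → x = v) :
    descendants p v = Finset.univ := by
  refine Finset.eq_univ_of_forall fun x ↦ mem_descendants.2 ?_
  induction x using hp.induction with
  | h x ih =>
    cases hx : p x with
    | none => exact hv x hx ▸ .refl
    | some y => exact .head hx (ih y hx)

end IsParentMap

namespace IsSubtreeAt

open scoped Classical in
lemma inter_descendants (hp : IsParentMap p) (hS : IsSubtreeAt p u S) (hc : p c = some u)
    (hcS : c ∈ S) : IsSubtreeAt p c (S ∩ descendants p c) where
  top_mem := Finset.mem_inter.2 ⟨hcS, self_mem_descendants p c⟩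
  exists_parent_mem w hw hwc := by
    simp only [Finset.mem_inter, mem_descendants] at hw ⊢
    rcases hw.2.cases_head with rfl | ⟨y, hwy, hyc⟩
    · exact absurd rfl hwc
    have hwu : w ≠ u := by
      rintro rfl
      exact hp.not_isDescendant_of_parent hc hw.2
    obtain ⟨x, hxS, hwx⟩ := hS.exists_parent_mem w hw.1 hwu
    obtain rfl : x = y := Option.some_injective _ (hwx.symm.trans hwy)
    exact ⟨x, ⟨hxS, hyc⟩, hwx⟩

open scoped Classical in
lemma inter_descendants_eq_empty (hp : IsParentMap p) (hS : IsSubtreeAt p u S) (hc : p c = some u)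
    (hcS : c ∉ S) : S ∩ descendants p c = ∅ :=
  Finset.disjoint_iff_inter_eq_empty.1 <| Finset.disjoint_left.2 fun _ hx hxc ↦
    hcS (hS.child_mem_of_isDescendant hp hc hx (mem_descendants.1 hxc))

open scoped Classical in
lemma insert_biUnion_inter_descendants (hp : IsParentMap p) (hS : IsSubtreeAt p u S)
    (hZ : S ∩ children p u ⊆ Z) : insert u (Z.biUnion fun c ↦ S ∩ descendants p c) = S := by
  ext x
  simp only [Finset.mem_insert, Finset.mem_biUnion, Finset.mem_inter]
  constructor
  · rintro (rfl | ⟨c, -, hx, -⟩)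
    exacts [hS.top_mem, hx]
  · intro hx
    have hxu := mem_descendants.2 (hS.isDescendant hp hx)
    rw [descendants_eq_insert, Finset.mem_insert, Finset.mem_biUnion] at hxu
    refine hxu.imp_right fun ⟨c, hc, hxc⟩ ↦ ⟨c, hZ (Finset.mem_inter.2 ⟨?_, hc⟩), hx, hxc⟩
    exact hS.child_mem_of_isDescendant hp (mem_children.1 hc) hx (mem_descendants.1 hxc)

lemma subset_descendants (hp : IsParentMap p) (hS : IsSubtreeAt p u S) : S ⊆ descendants p u :=
  fun _ hx ↦ mem_descendants.2 (hS.isDescendant hp hx)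

end IsSubtreeAt

open scoped Classical in
lemma insert_biUnion_inter_descendants_self (hp : IsParentMap p) (hZ : Z ⊆ children p u)
    {T : V → Finset V} (hT : ∀ c ∈ Z, T c ⊆ descendants p c) (hc : c ∈ Z) :
    insert u (Z.biUnion T) ∩ descendants p c = T c := by
  ext x
  simp only [Finset.mem_inter, Finset.mem_insert, Finset.mem_biUnion]
  constructor
  · rintro ⟨rfl | ⟨c', hc', hx⟩, hxc⟩
    · exact absurd hxc (hp.notMem_descendants_of_mem_children (hZ hc))
    · rwa [(hp.pairwiseDisjoint_descendants u).elim_finset (hZ hc) (hZ hc') x hxc (hT c' hc' hx)]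
  · exact fun hx ↦ ⟨.inr ⟨c, hc, hx⟩, hT c hc hx⟩

open scoped Classical in
lemma insert_biUnion_inter_children_subset (hp : IsParentMap p) (hZ : Z ⊆ children p u)
    {T : V → Finset V} (hT : ∀ c ∈ Z, T c ⊆ descendants p c) :
    insert u (Z.biUnion T) ∩ children p u ⊆ Z := by
  intro x hx
  obtain ⟨hx, hxu⟩ := Finset.mem_inter.1 hx
  rcases Finset.mem_insert.1 hx with rfl | hx
  · exact absurd (self_mem_descendants p x) (hp.notMem_descendants_of_mem_children hxu)
  · obtain ⟨c, hc, hxc⟩ := Finset.mem_biUnion.1 hx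
    rwa [(hp.pairwiseDisjoint_descendants u).elim_finset hxu (hZ hc) x
      (self_mem_descendants p x) (hT c hc hxc)]

open scoped Classical in
lemma IsParentMap.card_subtreesAt_filter (hp : IsParentMap p) (hZ : Z ⊆ children p u) :
    ((subtreesAt p u).filter fun S ↦ S ∩ children p u ⊆ Z).card =
      ∏ c ∈ Z, (subtreeCount p c + 1) := by
  have card_branch (c : V) : (insert ∅ (subtreesAt p c)).card = subtreeCount p c + 1 :=
    Finset.card_insert_of_notMem fun h ↦ Finset.notMem_empty c (mem_subtreesAt.1 h).top_mem
  simp_rw [← card_branch, ← Finset.card_pi]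
  refine Finset.card_bij (fun S _ c _ ↦ S ∩ descendants p c) (fun S hS ↦ ?_)
    (fun S hS S' hS' h ↦ ?_) fun T hT ↦ ?_
  · obtain ⟨hS, -⟩ := Finset.mem_filter.1 hS
    rw [mem_subtreesAt] at hS
    simp only [Finset.mem_pi, Finset.mem_insert, mem_subtreesAt]
    intro c hc
    have hcu := mem_children.1 (hZ hc)
    by_cases hcS : c ∈ S
    · exact .inr (hS.inter_descendants hp hcu hcS)
    · exact .inl (hS.inter_descendants_eq_empty hp hcu hcS)
  · simp only [Finset.mem_filter, mem_subtreesAt] at hS hS'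
    rw [← hS.1.insert_biUnion_inter_descendants hp hS.2,
      ← hS'.1.insert_biUnion_inter_descendants hp hS'.2]
    exact congrArg _ (Finset.biUnion_congr rfl fun c hc ↦ congrFun₂ h c hc)
  · let T' (c : V) : Finset V := if hc : c ∈ Z then T c hc else ∅
    have hT' : ∀ c ∈ Z, T' c = ∅ ∨ IsSubtreeAt p c (T' c) := by
      intro c hc
      simpa [T', hc] using Finset.mem_pi.1 hT c hc
    have T'_subset : ∀ c ∈ Z, T' c ⊆ descendants p c := fun c hc ↦
      (hT' c hc).elim (fun h ↦ h ▸ Finset.empty_subset _) fun h ↦ h.subset_descendants hp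
    refine ⟨insert u (Z.biUnion T'), Finset.mem_filter.2 ⟨?_, ?_⟩, ?_⟩
    · exact mem_subtreesAt.2 (.insert_biUnion (fun c hc ↦ mem_children.1 (hZ hc)) hT')
    · exact insert_biUnion_inter_children_subset hp hZ T'_subset
    · funext c hc
      rw [insert_biUnion_inter_descendants_self hp hZ T'_subset hc]
      exact dif_pos hc

lemma IsParentMap.subtreeCount_eq_prod (hp : IsParentMap p) (u : V) :
    subtreeCount p u = ∏ c ∈ children p u, (subtreeCount p c + 1) := by
  classical
  rw [← hp.card_subtreesAt_filter subset_rfl, subtreeCount, Finset.filter_true_of_mem]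
  exact fun S _ ↦ Finset.inter_subset_right

lemma IsParentMap.subtreeCount_pos (hp : IsParentMap p) (u : V) : 0 < subtreeCount p u := by
  rw [hp.subtreeCount_eq_prod]
  exact Finset.prod_pos fun c _ ↦ Nat.succ_pos _

section Graph

variable {G : SimpleGraph V}

open scoped Classical in
/-- The vertex sets of the connected subgraphs of a forest. -/
noncomputable def connectedSets (G : SimpleGraph V) : Finset (Finset V) :=
  {S | (G.induce (S : Set V)).Connected}

@[simp] lemma mem_connectedSets : S ∈ connectedSets G ↔ (G.induce (S : Set V)).Connected := by
  simp [connectedSets]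

open scoped Classical in
/-- The number of subtrees of a forest that contain `v`. -/
noncomputable def coverCount (G : SimpleGraph V) (v : V) : ℕ :=
  ((connectedSets G).filter (v ∈ ·)).card

namespace IsRooting

lemma coreIndex_eq_card_connectedSets (hG : IsRooting G p) :
    coreIndex G = (connectedSets G).card := by
  classical
  rw [coreIndex, ← Nat.card_eq_finsetCard]
  refine Nat.card_congr ⟨fun H ↦ ⟨H.1.verts.toFinset, ?_⟩,
    fun S ↦ ⟨(⊤ : G.Subgraph).induce S.1, ?_⟩, fun H ↦ ?_, fun S ↦ ?_⟩
  · rw [mem_connectedSets, SimpleGraph.connected_induce_iff, Set.coe_toFinset,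
      hG.induce_verts_eq H.2]
    exact H.2
  · exact SimpleGraph.connected_induce_iff.1 (mem_connectedSets.1 S.2)
  · ext1
    simpa using hG.induce_verts_eq H.2
  · ext1
    simp

lemma coreIndex_eq_sum (hG : IsRooting G p) : coreIndex G = ∑ u, subtreeCount p u := by
  classical
  have connectedSets_eq : connectedSets G = Finset.univ.biUnion (subtreesAt p) := by
    ext S
    simp [hG.connected_induce_iff]
  rw [hG.coreIndex_eq_card_connectedSets, connectedSets_eq, Finset.card_biUnion]
  · rfl
  · refine fun u _ v _ huv ↦ Finset.disjoint_left.2 fun S hu hv ↦ huv ?_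
    exact (mem_subtreesAt.1 hu).top_unique hG.isParentMap (mem_subtreesAt.1 hv)

lemma coverCount_root (hG : IsRooting G p) (hv : p v = none) :
    coverCount G v = subtreeCount p v := by
  classical
  refine congrArg Finset.card (Finset.ext fun S ↦ ?_)
  simp only [Finset.mem_filter, mem_connectedSets, hG.connected_induce_iff, mem_subtreesAt]
  constructor
  · rintro ⟨⟨u, hS⟩, hvS⟩
    by_cases hvu : v = u
    · exact hvu ▸ hS
    · obtain ⟨x, -, hx⟩ := hS.exists_parent_mem v hvS hvu
      simp [hv] at hx
  · exact fun hS ↦ ⟨⟨v, hS⟩, hS.top_mem⟩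

end IsRooting

open scoped Classical in
lemma IsParentMap.card_subtreesAt_filter_mem (hp : IsParentMap p) (hc : c ∈ children p u) :
    ((subtreesAt p u).filter (c ∈ ·)).card =
      subtreeCount p c * ∏ w ∈ (children p u).erase c, (subtreeCount p w + 1) := by
  have card_avoiding : ((subtreesAt p u).filter (c ∉ ·)).card =
      ∏ w ∈ (children p u).erase c, (subtreeCount p w + 1) := by
    rw [← hp.card_subtreesAt_filter (Finset.erase_subset _ _)]
    simp [Finset.subset_erase, mem_children.1 hc]
  have card_split := (subtreesAt p u).card_filter_add_card_filter_not (c ∈ ·)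
  rw [card_avoiding, ← subtreeCount, hp.subtreeCount_eq_prod,
    ← Finset.mul_prod_erase _ _ hc] at card_split
  linarith

namespace IsRooting

open scoped Classical in
lemma subtreeCount_add_le_coverCount (hG : IsRooting G p) (hc : c ∈ children p u) :
    subtreeCount p c +
      subtreeCount p c * ∏ w ∈ (children p u).erase c, (subtreeCount p w + 1) ≤
      coverCount G c := by
  have hp := hG.isParentMap
  rw [← hp.card_subtreesAt_filter_mem hc, subtreeCount, ← Finset.card_union_of_disjoint]
  · refine Finset.card_le_card fun S hS ↦ ?_
    simp only [Finset.mem_union, Finset.mem_filter, mem_subtreesAt, mem_connectedSets,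
      hG.connected_induce_iff] at hS ⊢
    rcases hS with hS | ⟨hS, hcS⟩
    exacts [⟨⟨c, hS⟩, hS.top_mem⟩, ⟨⟨u, hS⟩, hcS⟩]
  · refine Finset.disjoint_left.2 fun S hS hS' ↦ ?_
    simp only [Finset.mem_filter, mem_subtreesAt] at hS hS'
    obtain rfl := hS.top_unique hp hS'.1
    exact hp.notMem_descendants_of_mem_children hc (self_mem_descendants p c)

open scoped Classical in
lemma subtreeCount_le_prod_erase (hG : IsRooting G p) (hv : p v = none)
    (hmax : ∀ x, coverCount G x ≤ coverCount G v) (hc : c ∈ children p v) :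
    subtreeCount p c ≤ ∏ w ∈ (children p v).erase c, (subtreeCount p w + 1) := by
  have h := (hG.subtreeCount_add_le_coverCount hc).trans (hmax c)
  rw [hG.coverCount_root hv, hG.isParentMap.subtreeCount_eq_prod v,
    ← Finset.mul_prod_erase _ _ hc] at h
  linarith

lemma degree_eq [DecidableRel G.Adj] (hG : IsRooting G p) (u : V) :
    G.degree u = (children p u).card + (p u).toFinset.card := by
  classical
  rw [← Finset.card_union_of_disjoint, ← SimpleGraph.card_neighborFinset_eq_degree]
  · congr 1
    ext x
    simp [hG.adj_iff, or_comm]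
  · refine Finset.disjoint_left.2 fun x hx hx' ↦ ?_
    exact hG.isParentMap.not_isDescendant_of_parent (mem_children.1 hx)
      (.single (Option.mem_toFinset.1 hx'))

end IsRooting

end Graph

end Counting

section Legs

variable {a b : ℕ} {L : Multiset ℕ}

/-- The number of subtrees containing the centre of a spider whose legs have the numbers of
vertices listed in `L`. -/
def centralCount (L : Multiset ℕ) : ℕ := (L.map (· + 1)).prod

/-- The number of subtrees avoiding the centre of a spider whose legs have the numbers of
vertices listed in `L`. -/
def peripheralCount (L : Multiset ℕ) : ℕ := (L.map fun a ↦ (a + 1).choose 2).sum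

@[simp] lemma centralCount_cons (a : ℕ) (L : Multiset ℕ) :
    centralCount (a ::ₘ L) = (a + 1) * centralCount L := by
  simp [centralCount]

@[simp] lemma centralCount_add (L M : Multiset ℕ) :
    centralCount (L + M) = centralCount L * centralCount M := by
  simp [centralCount]

@[simp] lemma centralCount_replicate (m a : ℕ) :
    centralCount (.replicate m a) = (a + 1) ^ m := by
  simp [centralCount]

lemma centralCount_cons_succ (a : ℕ) (L : Multiset ℕ) :
    centralCount ((a + 1) ::ₘ L) = centralCount (a ::ₘ L) + centralCount L := by
  simp only [centralCount_cons]
  ring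

lemma centralCount_sum {ι : Type*} (s : Finset ι) (L : ι → Multiset ℕ) :
    centralCount (∑ i ∈ s, L i) = ∏ i ∈ s, centralCount (L i) := by
  classical
  induction s using Finset.induction_on with
  | empty => rfl
  | insert i s hi ih => simp [hi, ih]

lemma centralCount_pos (L : Multiset ℕ) : 0 < centralCount L :=
  Multiset.prod_pos (by simp)

@[simp] lemma peripheralCount_cons (a : ℕ) (L : Multiset ℕ) :
    peripheralCount (a ::ₘ L) = (a + 1).choose 2 + peripheralCount L := by
  simp [peripheralCount]

@[simp] lemma peripheralCount_add (L M : Multiset ℕ) :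
    peripheralCount (L + M) = peripheralCount L + peripheralCount M := by
  simp [peripheralCount]

@[simp] lemma peripheralCount_replicate (m a : ℕ) :
    peripheralCount (.replicate m a) = m * (a + 1).choose 2 := by
  simp [peripheralCount]

lemma peripheralCount_sum {ι : Type*} (s : Finset ι) (L : ι → Multiset ℕ) :
    peripheralCount (∑ i ∈ s, L i) = ∑ i ∈ s, peripheralCount (L i) := by
  classical
  induction s using Finset.induction_on with
  | empty => rfl
  | insert i s hi ih => simp [hi, ih]

lemma peripheralCount_cons_succ (a : ℕ) (L : Multiset ℕ) :
    peripheralCount ((a + 1) ::ₘ L) = peripheralCount (a ::ₘ L) + (a + 1) := by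
  simp only [peripheralCount_cons, Nat.choose_succ_succ' (a + 1) 1, Nat.choose_one_right]
  ring

lemma peripheralCount_exchange (a b : ℕ) (L : Multiset ℕ) :
    peripheralCount (a ::ₘ (b + 1) ::ₘ L) + a = peripheralCount ((a + 1) ::ₘ b ::ₘ L) + b := by
  rw [Multiset.cons_swap a, peripheralCount_cons_succ, peripheralCount_cons_succ,
    Multiset.cons_swap a]
  ring

lemma centralCount_exchange (a b : ℕ) (L : Multiset ℕ) :
    centralCount (a ::ₘ (b + 1) ::ₘ L) + b * centralCount L =
      centralCount ((a + 1) ::ₘ b ::ₘ L) + a * centralCount L := by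
  simp only [centralCount_cons]
  ring

/-- The number of subtrees of a spider whose legs have the numbers of vertices listed in `L`. -/
def spiderCount (L : Multiset ℕ) : ℕ := centralCount L + peripheralCount L

lemma spiderCount_le_exchange (hab : a ≤ b) (L : Multiset ℕ) :
    spiderCount (a ::ₘ (b + 1) ::ₘ L) ≤ spiderCount ((a + 1) ::ₘ b ::ₘ L) := by
  obtain ⟨d, rfl⟩ := Nat.exists_eq_add_of_le hab
  have hcentral := centralCount_exchange a (a + d) L
  have hperipheral := peripheralCount_exchange a (a + d) L
  have hd : d ≤ d * centralCount L := Nat.le_mul_of_pos_right d (centralCount_pos L)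
  rw [add_mul] at hcentral
  unfold spiderCount
  omega

/-- The most even distribution of `n` vertices over `k` legs. -/
def balancedLegs (n k : ℕ) : Multiset ℕ :=
  .replicate (n % k) (n / k + 1) + .replicate (k - n % k) (n / k)

lemma eq_balancedLegs_of_forall_le_add_one (hL : L ≠ 0) (h : ∀ a ∈ L, ∀ b ∈ L, b ≤ a + 1) :
    L = balancedLegs L.sum L.card := by
  obtain ⟨m, hm, hmin⟩ := L.toFinset.exists_min_image id (by simpa using hL)
  rw [Multiset.mem_toFinset] at hm
  have eq_or_eq : ∀ a ∈ L, a = m + 1 ∨ a = m := fun a ha ↦ by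
    have hma : m ≤ a := hmin a (Multiset.mem_toFinset.2 ha)
    have ham := h m hm a ha
    omega
  obtain ⟨s, t, rfl⟩ : ∃ s t, L = .replicate s (m + 1) + .replicate t m := by
    refine ⟨L.count (m + 1), L.count m, ?_⟩
    rw [← Multiset.filter_eq', ← Multiset.filter_eq', eq_comm]
    convert Multiset.filter_add_not (· = m + 1) L using 2
    refine Multiset.filter_congr fun a ha ↦ ?_
    have := eq_or_eq a ha
    omega
  have ht : t ≠ 0 := by
    rintro rfl
    have := Multiset.eq_of_mem_replicate (by simpa using hm)
    omega
  have hsum : ((Multiset.replicate s (m + 1) + .replicate t m).sum) = s + (s + t) * m := by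
    simp only [Multiset.sum_add, Multiset.sum_replicate, smul_eq_mul]
    ring
  have hcard : (Multiset.replicate s (m + 1) + .replicate t m).card = s + t := by simp
  rw [hsum, hcard, balancedLegs, Nat.add_mul_mod_self_left, Nat.add_mul_div_left _ _ (by omega),
    Nat.mod_eq_of_lt (by omega), Nat.div_eq_of_lt (by omega)]
  simp

theorem spiderCount_le_balancedLegs (hL : L ≠ 0) :
    spiderCount L ≤ spiderCount (balancedLegs L.sum L.card) := by
  induction h : peripheralCount L using Nat.strong_induction_on generalizing L with
  | _ n ih =>
    subst h
    by_cases hbal : ∀ a ∈ L, ∀ b ∈ L, b ≤ a + 1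
    · rw [← eq_balancedLegs_of_forall_le_add_one hL hbal]
    push Not at hbal
    obtain ⟨a, ha, b, hb, hab⟩ := hbal
    obtain ⟨b, rfl⟩ := Nat.exists_eq_add_of_le' (Nat.one_le_of_lt hab)
    obtain ⟨M, rfl⟩ := Multiset.exists_cons_of_mem ha
    obtain ⟨M, rfl⟩ := Multiset.exists_cons_of_mem
      ((Multiset.mem_cons.1 hb).resolve_left (by omega))
    have peripheral_lt : peripheralCount ((a + 1) ::ₘ b ::ₘ M) <
        peripheralCount (a ::ₘ (b + 1) ::ₘ M) := by
      have := peripheralCount_exchange a b M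
      omega
    have sum_eq : (a ::ₘ (b + 1) ::ₘ M).sum = ((a + 1) ::ₘ b ::ₘ M).sum := by
      simp only [Multiset.sum_cons]
      omega
    have card_eq : (a ::ₘ (b + 1) ::ₘ M).card = ((a + 1) ::ₘ b ::ₘ M).card := by
      simp only [Multiset.card_cons]
    rw [sum_eq, card_eq]
    exact (spiderCount_le_exchange (by omega) M).trans
      (ih _ peripheral_lt (Multiset.cons_ne_zero) rfl)

end Legs

/- The factors `x i` are replaced by `y i` one at a time; `m` is the product of the remaining
factors, some of which have been replaced already. -/
lemma sum_add_prod_mul_le {ι : Type*} [DecidableEq ι] (s : Finset ι) (S T x y : ι → ℕ) (t : ℕ)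
    (hxy : ∀ i ∈ s, x i ≤ y i)
    (hST : ∀ i ∈ s, ∀ m, (∏ j ∈ s.erase i, x j) * t ≤ m → S i + x i * m ≤ T i + y i * m) :
    ∑ i ∈ s, S i + (∏ i ∈ s, x i) * t ≤ ∑ i ∈ s, T i + (∏ i ∈ s, y i) * t := by
  induction s using Finset.induction_on generalizing t with
  | empty => simp
  | insert a s ha ih =>
    rw [Finset.forall_mem_insert] at hxy hST
    simp only [Finset.sum_insert ha, Finset.prod_insert ha]
    have replace_tail : ∑ i ∈ s, S i + (∏ i ∈ s, x i) * (x a * t) ≤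
        ∑ i ∈ s, T i + (∏ i ∈ s, y i) * (x a * t) := by
      refine ih _ hxy.2 fun i hi m hm ↦ hST.2 i hi m ?_
      have hia : a ≠ i := fun h ↦ ha (h ▸ hi)
      rw [Finset.erase_insert_of_ne hia, Finset.prod_insert (by simp [ha])]
      linarith
    have replace_head : S a + x a * ((∏ i ∈ s, y i) * t) ≤ T a + y a * ((∏ i ∈ s, y i) * t) := by
      refine hST.1 _ ?_
      rw [Finset.erase_insert ha]
      exact Nat.mul_le_mul_right t (Finset.prod_le_prod' hxy.2)
    linarith

section Domination

variable {V : Type*} [Fintype V] {p : V → Option V} {u v x : V} {L : Multiset ℕ}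

open scoped Classical in
/-- The childless vertices of the branch hanging from `u`. -/
noncomputable def leavesBelow (p : V → Option V) (u : V) : Finset V :=
  (descendants p u).filter (children p · = ∅)

lemma mem_leavesBelow : x ∈ leavesBelow p u ↔ x ∈ descendants p u ∧ children p x = ∅ := by
  simp [leavesBelow]

/-- The branch hanging from `u` can be replaced by paths with the vertex numbers listed in `L`,
without changing the numbers of vertices and leaves and without losing subtrees. In
`sum_add_mul_le`, `t` is the number of subtrees of the rest of the tree that contain the
parent of `u`. -/
structure IsDominatedBy (p : V → Option V) (u : V) (L : Multiset ℕ) : Prop where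
  card_eq : L.card = (leavesBelow p u).card
  sum_eq : L.sum = (descendants p u).card
  subtreeCount_lt : subtreeCount p u < centralCount L
  sum_add_mul_le : ∀ t ≥ subtreeCount p u,
    ∑ x ∈ descendants p u, subtreeCount p x + (subtreeCount p u + 1) * t ≤
      peripheralCount L + centralCount L * t

namespace IsParentMap

lemma card_descendants (hp : IsParentMap p) (u : V) :
    (descendants p u).card = ∑ c ∈ children p u, (descendants p c).card + 1 := by
  simp only [Finset.card_eq_sum_ones, hp.sum_descendants u, add_comm]

lemma card_leavesBelow (hp : IsParentMap p) (hu : (children p u).Nonempty) :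
    (leavesBelow p u).card = ∑ c ∈ children p u, (leavesBelow p c).card := by
  simp only [leavesBelow, Finset.card_filter, hp.sum_descendants u, hu.ne_empty, if_false,
    zero_add]

open scoped Classical in
lemma exists_legs_of_children (hp : IsParentMap p)
    (h : ∀ c ∈ children p u, ∃ L, IsDominatedBy p c L) :
    ∃ L, L.card = ∑ c ∈ children p u, (leavesBelow p c).card ∧
      L.sum = ∑ c ∈ children p u, (descendants p c).card ∧
      subtreeCount p u ≤ centralCount L ∧
      ∀ t, (∀ c ∈ children p u,
          subtreeCount p c ≤ (∏ w ∈ (children p u).erase c, (subtreeCount p w + 1)) * t) →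
        ∑ c ∈ children p u, ∑ x ∈ descendants p c, subtreeCount p x + subtreeCount p u * t ≤
          peripheralCount L + centralCount L * t := by
  choose! L hL using h
  refine ⟨∑ c ∈ children p u, L c, ?_, ?_, ?_, fun t ht ↦ ?_⟩
  · simpa using Finset.sum_congr rfl fun c hc ↦ (hL c hc).card_eq
  · rw [← Finset.sum_congr rfl fun c hc ↦ (hL c hc).sum_eq]
    exact map_sum Multiset.sumAddMonoidHom L (children p u)
  · rw [hp.subtreeCount_eq_prod, centralCount_sum]
    exact Finset.prod_le_prod' fun c hc ↦ (hL c hc).subtreeCount_lt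
  · rw [hp.subtreeCount_eq_prod, centralCount_sum, peripheralCount_sum]
    exact sum_add_prod_mul_le _ _ _ _ _ t (fun c hc ↦ (hL c hc).subtreeCount_lt)
      fun c hc m hm ↦ (hL c hc).sum_add_mul_le m ((ht c hc).trans hm)

lemma isDominatedBy_of_children_eq_empty (hp : IsParentMap p) (hu : children p u = ∅) :
    IsDominatedBy p u {1} := by
  have hcount : subtreeCount p u = 1 := by simp [hp.subtreeCount_eq_prod u, hu]
  have hdesc : descendants p u = {u} := by simp [descendants_eq_insert, hu]
  refine ⟨?_, ?_, ?_, fun t _ ↦ ?_⟩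
  · simp [leavesBelow, hdesc, Finset.filter_singleton, hu]
  · simp [hdesc]
  · simp [hcount, centralCount]
  · simp [hcount, hdesc, centralCount, peripheralCount]

lemma subtreeCount_le_of_mem_children (hp : IsParentMap p) {c : V} (hc : c ∈ children p u) :
    subtreeCount p c ≤ subtreeCount p u := by
  rw [hp.subtreeCount_eq_prod u]
  exact (Nat.le_succ _).trans
    (Finset.single_le_prod' (f := fun c ↦ subtreeCount p c + 1) (fun _ _ ↦ Nat.succ_pos _) hc)

lemma exists_isDominatedBy (hp : IsParentMap p) (u : V) : ∃ L, IsDominatedBy p u L := by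
  classical
  induction u using hp.child_induction with
  | ih u ih =>
    rcases (children p u).eq_empty_or_nonempty with hu | hu
    · exact ⟨{1}, hp.isDominatedBy_of_children_eq_empty hu⟩
    obtain ⟨L, hcard, hsum, hcount, hle⟩ := hp.exists_legs_of_children ih
    obtain ⟨a, M, rfl⟩ : ∃ a M, L = a ::ₘ M := by
      obtain ⟨c, hc⟩ := hu
      have sum_pos : 0 < L.sum := hsum ▸ Finset.sum_pos'
        (fun _ _ ↦ Nat.zero_le _) ⟨c, hc, Finset.card_pos.2 ⟨c, self_mem_descendants p c⟩⟩
      obtain ⟨a, ha⟩ := Multiset.exists_mem_of_ne_zero fun h : L = 0 ↦ by simp [h] at sum_pos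
      exact ⟨a, Multiset.exists_cons_of_mem ha⟩
    have hcentral : centralCount ((a + 1) ::ₘ M) = centralCount (a ::ₘ M) + centralCount M := by
      simp only [centralCount_cons]
      ring
    have hM := centralCount_pos M
    -- The top vertex `u` is absorbed into one of the legs that replace the branches below it.
    refine ⟨(a + 1) ::ₘ M, ?_, ?_, by omega, fun t ht ↦ ?_⟩
    · rw [hp.card_leavesBelow hu, ← hcard, Multiset.card_cons, Multiset.card_cons]
    · rw [hp.card_descendants, ← hsum, Multiset.sum_cons, Multiset.sum_cons]
      ring
    have head_le : subtreeCount p u + t ≤ a + 1 + centralCount M * t := by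
      rw [centralCount_cons] at hcount
      rcases Nat.eq_or_lt_of_le hM with h | h
      · rw [← h] at hcount ⊢
        omega
      · have := Nat.mul_le_mul_right t h
        omega
    have children_le := hle t fun c hc ↦
      ((hp.subtreeCount_le_of_mem_children hc).trans ht).trans
        (Nat.le_mul_of_pos_left t (Finset.prod_pos fun _ _ ↦ Nat.succ_pos _))
    rw [hp.sum_descendants, hcentral, peripheralCount_cons_succ]
    linarith

end IsParentMap

namespace IsRooting

variable {G : SimpleGraph V}

lemma two_le_card_children (hG : IsRooting G p) (hroot : ∀ x, p x = none ↔ x = v)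
    (hmax : ∀ x, coverCount G x ≤ coverCount G v) (hV : 2 < Fintype.card V) :
    2 ≤ (children p v).card := by
  classical
  have hp := hG.isParentMap
  rw [← Finset.card_univ, ← hp.descendants_eq_univ fun x ↦ (hroot x).1, hp.card_descendants] at hV
  by_contra! hlt
  rcases Nat.le_one_iff_eq_zero_or_eq_one.1 (Nat.le_of_lt_succ hlt) with h | h
  · rw [Finset.card_eq_zero.1 h] at hV
    simp at hV
  obtain ⟨c, hc⟩ := Finset.card_eq_one.1 h
  have count_le := hG.subtreeCount_le_prod_erase ((hroot v).2 rfl) hmax (c := c) (by simp [hc])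
  have children_eq : children p c = ∅ := by
    refine Finset.eq_empty_of_forall_notMem fun w hw ↦ ?_
    rw [hp.subtreeCount_eq_prod, ← Finset.mul_prod_erase _ _ hw] at count_le
    have hw_pos := hp.subtreeCount_pos w
    have hprod_pos : 0 < ∏ x ∈ (children p c).erase w, (subtreeCount p x + 1) :=
      Finset.prod_pos fun _ _ ↦ Nat.succ_pos _
    simp only [hc, Finset.erase_singleton, Finset.prod_empty] at count_le
    nlinarith
  rw [hc, Finset.sum_singleton, hp.card_descendants, children_eq] at hV
  simp at hV

lemma leavesBelow_root [DecidableRel G.Adj] (hG : IsRooting G p)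
    (hroot : ∀ x, p x = none ↔ x = v) (hv : 2 ≤ (children p v).card) :
    leavesBelow p v = Finset.univ.filter (G.degree · = 1) := by
  ext x
  rw [mem_leavesBelow, hG.isParentMap.descendants_eq_univ fun x ↦ (hroot x).1,
    Finset.mem_filter, hG.degree_eq, ← Finset.card_eq_zero, and_congr_right_iff]
  intro _
  cases hx : p x with
  | none =>
    obtain rfl := (hroot x).1 hx
    simp only [Option.toFinset_none, Finset.card_empty]
    omega
  | some y => simp

theorem exists_coreIndex_le_spiderCount (hG : IsRooting G p)
    (hroot : ∀ x, p x = none ↔ x = v) (hmax : ∀ x, coverCount G x ≤ coverCount G v)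
    (hv : (children p v).Nonempty) :
    ∃ L : Multiset ℕ, L.card = (leavesBelow p v).card ∧ L.sum + 1 = Fintype.card V ∧
      coreIndex G ≤ spiderCount L := by
  classical
  have hp := hG.isParentMap
  have huniv := hp.descendants_eq_univ fun x ↦ (hroot x).1
  obtain ⟨L, hcard, hsum, -, hle⟩ :=
    hp.exists_legs_of_children fun c (_ : c ∈ children p v) ↦ hp.exists_isDominatedBy c
  refine ⟨L, ?_, ?_, ?_⟩
  · rw [hcard, hp.card_leavesBelow hv]
  · rw [hsum, ← hp.card_descendants, huniv, Finset.card_univ]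
  · have hle := hle 1 fun c hc ↦ by
      simpa using hG.subtreeCount_le_prod_erase ((hroot v).2 rfl) hmax hc
    rw [hG.coreIndex_eq_sum, ← huniv, hp.sum_descendants, spiderCount]
    linarith

end IsRooting

end Domination

theorem coreIndex_le_spiderCount_balancedLegs {V : Type*} [Fintype V] {G : SimpleGraph V}
    [DecidableRel G.Adj] (hG : G.IsTree) (hV : 2 < Fintype.card V) :
    coreIndex G ≤ spiderCount
      (balancedLegs (Fintype.card V - 1) (Finset.univ.filter (G.degree · = 1)).card) := by
  have := hG.connected.nonempty
  obtain ⟨v, hmax⟩ := Finite.exists_max (coverCount G)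
  obtain ⟨p, hp, hroot⟩ := exists_isRooting hG v
  have hv := hp.two_le_card_children hroot hmax hV
  obtain ⟨L, hcard, hsum, hle⟩ :=
    hp.exists_coreIndex_le_spiderCount hroot hmax (Finset.card_pos.1 (by omega))
  have hL : L ≠ 0 := by
    rintro rfl
    rw [Multiset.sum_zero] at hsum
    omega
  rw [← hp.leavesBelow_root hroot hv, ← hcard, ← hsum, Nat.add_sub_cancel]
  exact hle.trans (spiderCount_le_balancedLegs hL)

section Starlike

variable {ι : Type*} {ℓ : ι → ℕ}

/-- The parent map of a starlike tree rooted at its centre `Sum.inl ()`: the vertices of the leg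
`i` are numbered by `Fin (ℓ i)`, starting from the centre. -/
def legParent (ℓ : ι → ℕ) : Unit ⊕ (Σ i, Fin (ℓ i)) → Option (Unit ⊕ (Σ i, Fin (ℓ i)))
  | .inl _ => none
  | .inr ⟨_, ⟨0, _⟩⟩ => some (.inl ())
  | .inr ⟨i, ⟨a + 1, h⟩⟩ => some (.inr ⟨i, ⟨a, Nat.lt_of_succ_lt h⟩⟩)

/-- The starlike tree obtained by attaching to a central vertex a path on `ℓ i` vertices for
each `i`. -/
def starlike (ℓ : ι → ℕ) : SimpleGraph (Unit ⊕ (Σ i, Fin (ℓ i))) :=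
  SimpleGraph.fromRel fun x y ↦ legParent ℓ y = some x

@[simp] lemma legParent_inl (c : Unit) : legParent ℓ (.inl c) = none := rfl

@[simp] lemma legParent_inr_eq_some_inl {i : ι} {a : Fin (ℓ i)} {c : Unit} :
    legParent ℓ (.inr ⟨i, a⟩) = some (.inl c) ↔ (a : ℕ) = 0 := by
  rcases a with ⟨_ | a, h⟩ <;> simp [legParent]

@[simp] lemma legParent_inr_eq_some_inr {i j : ι} {a : Fin (ℓ i)} {b : Fin (ℓ j)} :
    legParent ℓ (.inr ⟨i, a⟩) = some (.inr ⟨j, b⟩) ↔ i = j ∧ (a : ℕ) = b + 1 := by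
  rcases a with ⟨_ | a, ha⟩
  · simp [legParent]
  · obtain ⟨b, hb⟩ := b
    simp only [legParent, Option.some_inj, Sum.inr.injEq, Sigma.mk.injEq, Nat.add_right_cancel_iff,
      and_congr_right_iff]
    rintro rfl
    simp

lemma isRooting_starlike (ℓ : ι → ℕ) : IsRooting (starlike ℓ) (legParent ℓ) := by
  have isParentMap : IsParentMap (legParent ℓ) := by
    refine Subrelation.wf (fun {x y} hxy ↦ ?_)
      (measure (Sum.elim (fun _ ↦ 0) fun v : Σ i, Fin (ℓ i) ↦ (v.2 : ℕ) + 1)).wf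
    rcases x with _ | ⟨i, a⟩ <;> rcases y with _ | ⟨j, b⟩ <;>
      simp_all [WellFoundedRelation.rel, InvImage]
  refine ⟨isParentMap, fun x y ↦ ?_⟩
  have ne_of_parent {x y} (h : legParent ℓ x = some y) : x ≠ y := by
    rintro rfl
    exact isParentMap.not_isDescendant_of_parent h .refl
  rw [starlike, SimpleGraph.fromRel_adj, or_comm, and_iff_right_iff_imp]
  rintro (h | h)
  exacts [ne_of_parent h, (ne_of_parent h).symm]

variable [Fintype ι]

lemma subtreeCount_legParent_inr (i : ι) (a : Fin (ℓ i)) :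
    subtreeCount (legParent ℓ) (.inr ⟨i, a⟩) = ℓ i - a := by
  have hp := (isRooting_starlike ℓ).isParentMap
  obtain ⟨d, hd⟩ := Nat.exists_eq_add_of_lt a.2
  induction d generalizing a with
  | zero =>
    have hchildren : children (legParent ℓ) (.inr ⟨i, a⟩) = ∅ := by
      ext (_ | ⟨j, b⟩)
      · simp
      · simp only [mem_children, legParent_inr_eq_some_inr, Finset.notMem_empty, iff_false]
        rintro ⟨rfl, hb⟩
        omega
    rw [hp.subtreeCount_eq_prod, hchildren, Finset.prod_empty]
    omega
  | succ d ih =>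
    have hlt : (a : ℕ) + 1 < ℓ i := by omega
    have hchildren : children (legParent ℓ) (.inr ⟨i, a⟩) = {.inr ⟨i, ⟨a + 1, hlt⟩⟩} := by
      ext (_ | ⟨j, b⟩)
      · simp
      · simp only [mem_children, legParent_inr_eq_some_inr, Finset.mem_singleton, Sum.inr.injEq,
          Sigma.mk.injEq, and_congr_right_iff]
        rintro rfl
        simp [Fin.ext_iff]
    rw [hp.subtreeCount_eq_prod, hchildren, Finset.prod_singleton, ih _ (by grind)]
    dsimp only
    omega

lemma subtreeCount_legParent_inl (c : Unit) :
    subtreeCount (legParent ℓ) (.inl c) = ∏ i, (ℓ i + 1) := by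
  have prod_leg (n : ℕ) : (∏ a : Fin n, if (a : ℕ) = 0 then n - (a : ℕ) + 1 else 1) = n + 1 := by
    cases n with
    | zero => rfl
    | succ n => simp
  classical
  rw [(isRooting_starlike ℓ).isParentMap.subtreeCount_eq_prod, children, Finset.prod_filter,
    Fintype.prod_sum_type, Fintype.prod_sigma]
  simp [subtreeCount_legParent_inr, prod_leg]

lemma coreIndex_starlike (ℓ : ι → ℕ) :
    coreIndex (starlike ℓ) = ∏ i, (ℓ i + 1) + ∑ i, (ℓ i + 1).choose 2 := by
  have sum_leg (n : ℕ) : ∑ a : Fin n, (n - (a : ℕ)) = (n + 1).choose 2 := by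
    induction n with
    | zero => rfl
    | succ n ih =>
      rw [Fin.sum_univ_succ, Nat.choose_succ_succ' (n + 1) 1, Nat.choose_one_right, ← ih]
      simp
  rw [(isRooting_starlike ℓ).coreIndex_eq_sum, Fintype.sum_sum_type, Fintype.sum_sigma]
  simp [subtreeCount_legParent_inr, subtreeCount_legParent_inl, sum_leg]

end Starlike

section Spider

/-- The lengths of the legs of `spider k q r`, in one family. -/
def spiderLegs (k q r : ℕ) : Fin r ⊕ Fin (k - r) → ℕ :=
  Sum.elim (fun _ ↦ q + 1) (fun _ ↦ q)

/-- The identification of the vertices of `spider k q r` with those of a starlike tree. -/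
def spiderEquiv (k q r : ℕ) : Unit ⊕ ((Fin r × Fin (q + 1)) ⊕ (Fin (k - r) × Fin q)) ≃
    Unit ⊕ (Σ i, Fin (spiderLegs k q r i)) :=
  .sumCongr (.refl Unit) <|
    (Equiv.sumCongr (Equiv.sigmaEquivProd _ _).symm (Equiv.sigmaEquivProd _ _).symm).trans
      (Equiv.sumSigmaDistrib fun i ↦ Fin (spiderLegs k q r i)).symm

lemma spider_adj_iff (k q r : ℕ) (x y) :
    (starlike (spiderLegs k q r)).Adj (spiderEquiv k q r x) (spiderEquiv k q r y) ↔
      (spider k q r).Adj x y := by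
  have centre (c : Unit) : legParent (spiderLegs k q r) (spiderEquiv k q r (.inl c)) = none := rfl
  have long_first (i : Fin r) (a : Fin (q + 1)) (c : Unit) :
      legParent (spiderLegs k q r) (spiderEquiv k q r (.inr (.inl (i, a)))) =
        some (spiderEquiv k q r (.inl c)) ↔ (a : ℕ) = 0 := legParent_inr_eq_some_inl
  have short_first (i : Fin (k - r)) (a : Fin q) (c : Unit) :
      legParent (spiderLegs k q r) (spiderEquiv k q r (.inr (.inr (i, a)))) =
        some (spiderEquiv k q r (.inl c)) ↔ (a : ℕ) = 0 := legParent_inr_eq_some_inl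
  have long_next (i j : Fin r) (a b : Fin (q + 1)) :
      legParent (spiderLegs k q r) (spiderEquiv k q r (.inr (.inl (i, a)))) =
        some (spiderEquiv k q r (.inr (.inl (j, b)))) ↔ i = j ∧ (a : ℕ) = b + 1 :=
    legParent_inr_eq_some_inr.trans (and_congr_left' Sum.inl_injective.eq_iff)
  have short_next (i j : Fin (k - r)) (a b : Fin q) :
      legParent (spiderLegs k q r) (spiderEquiv k q r (.inr (.inr (i, a)))) =
        some (spiderEquiv k q r (.inr (.inr (j, b)))) ↔ i = j ∧ (a : ℕ) = b + 1 :=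
    legParent_inr_eq_some_inr.trans (and_congr_left' Sum.inr_injective.eq_iff)
  have long_short (i : Fin r) (j : Fin (k - r)) (a : Fin (q + 1)) (b : Fin q) :
      legParent (spiderLegs k q r) (spiderEquiv k q r (.inr (.inl (i, a)))) ≠
        some (spiderEquiv k q r (.inr (.inr (j, b)))) :=
    fun h ↦ Sum.inl_ne_inr (legParent_inr_eq_some_inr.1 h).1
  have short_long (i : Fin (k - r)) (j : Fin r) (a : Fin q) (b : Fin (q + 1)) :
      legParent (spiderLegs k q r) (spiderEquiv k q r (.inr (.inr (i, a)))) ≠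
        some (spiderEquiv k q r (.inr (.inl (j, b)))) :=
    fun h ↦ Sum.inr_ne_inl (legParent_inr_eq_some_inr.1 h).1
  rw [starlike, spider, SimpleGraph.fromRel_adj, SimpleGraph.fromRel_adj,
    (spiderEquiv k q r).injective.ne_iff]
  refine and_congr_right' ?_
  rcases x with _ | ⟨i, a⟩ | ⟨i, a⟩ <;> rcases y with _ | ⟨j, b⟩ | ⟨j, b⟩ <;>
    simp [centre, long_first, short_first, long_next, short_next, long_short, short_long,
      eq_comm]

/-- The spider `spider k q r` as a starlike tree. -/
def spiderIsoStarlike (k q r : ℕ) : spider k q r ≃g starlike (spiderLegs k q r) where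
  toEquiv := spiderEquiv k q r
  map_rel_iff' := spider_adj_iff k q r _ _

lemma coreIndex_spider (k q r : ℕ) :
    coreIndex (spider k q r) = spiderCount (.replicate r (q + 1) + .replicate (k - r) q) := by
  rw [coreIndex_congr (spiderIsoStarlike k q r), coreIndex_starlike]
  simp [spiderCount, spiderLegs]

lemma peripheralCount_replicate_add_replicate {k r : ℕ} (hrk : r ≤ k) (q : ℕ) :
    peripheralCount (.replicate r (q + 1) + .replicate (k - r) q) =
      (q + 1) * (q * k + 2 * r) / 2 := by
  obtain ⟨s, rfl⟩ := Nat.exists_eq_add_of_le hrk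
  have choose_mul_two (a : ℕ) : (a + 1).choose 2 * 2 = (a + 1) * a := by
    simpa using (Nat.add_one_mul_choose_eq a 1).symm
  rw [Nat.add_sub_cancel_left, peripheralCount_add, peripheralCount_replicate,
    peripheralCount_replicate]
  refine (Nat.div_eq_of_eq_mul_left two_pos ?_).symm
  calc
    (q + 1) * (q * (r + s) + 2 * r) = r * ((q + 2) * (q + 1)) + s * ((q + 1) * q) := by ring
    _ = r * ((q + 2).choose 2 * 2) + s * ((q + 1).choose 2 * 2) := by
      rw [choose_mul_two, choose_mul_two]
    _ = (r * (q + 2).choose 2 + s * (q + 1).choose 2) * 2 := by ring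

end Spider

theorem spider_maximizes_coreIndex_general (n k q r : ℕ) (hk : 2 ≤ k) (hkn : k < n)
    (hq : q = (n - 1) / k) (hr : r = n - 1 - k * q) :
    coreIndex (spider k q r) =
      (q + 2) ^ r * (q + 1) ^ (k - r) + (q + 1) * (q * k + 2 * r) / 2 ∧
    (∀ {V : Type*} [Fintype V] (G : SimpleGraph V) [DecidableRel G.Adj],
      Fintype.card V = n → G.IsTree →
      (Finset.univ.filter fun v => G.degree v = 1).card = k →
      coreIndex G ≤ coreIndex (spider k q r)) := by
  have hmod : r = (n - 1) % k := by rw [hr, hq, Nat.mod_eq_sub_mul_div]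
  have hrk : r ≤ k := hmod ▸ (Nat.mod_lt _ (by omega)).le
  constructor
  · rw [coreIndex_spider, spiderCount, peripheralCount_replicate_add_replicate hrk]
    simp
  · rintro V _ G _ rfl hG rfl
    rw [coreIndex_spider, hmod, hq]
    exact coreIndex_le_spiderCount_balancedLegs hG (by omega)

/-- For `2 ≤ k ≤ n - 3`, with `q = ⌊(n-1)/k⌋` and `r = n - 1 - kq`, the spider tree
`T_{n,k}` (a vertex of degree `k` whose removal leaves `r` paths `P_{q+1}` and `k - r`
paths `P_q`) satisfies `F(T_{n,k}) = (q+2)^r (q+1)^{k-r} + (q+1)(qk + 2r)/2` and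
maximizes the core index over all trees on `n` vertices with exactly `k` leaves. -/
theorem spider_maximizes_coreIndex (n k q r : ℕ) (hk : 2 ≤ k) (hkn : k ≤ n - 3)
    (hq : q = (n - 1) / k) (hr : r = n - 1 - k * q) :
    coreIndex (spider k q r) =
      (q + 2) ^ r * (q + 1) ^ (k - r) + (q + 1) * (q * k + 2 * r) / 2 ∧
    (∀ {V : Type} [Fintype V] (G : SimpleGraph V) [DecidableRel G.Adj],
      Fintype.card V = n → G.IsTree →
      (Finset.univ.filter fun v => G.degree v = 1).card = k →
      coreIndex G ≤ coreIndex (spider k q r)) :=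
  spider_maximizes_coreIndex_general n k q r hk (by omega) hq hr
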